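/- There exists an absolute constant C > 0 such that the following holds. Let n be a positive integer, let P ⊂ ℝⁿ be a convex polytope containing r·B_n for some r > 0, with facet set 𝓕 satisfying log|𝓕| < n/4. Then M(P) := ∫_{S^{n-1}} ‖θ‖_P dσ(θ) ≤ C·(1/r)·√(log|𝓕| / n), where ‖x‖_P = inf{t > 0 : x ∈ t·P} is the gauge (Minkowski) functional of P and σ is the rotation-invariant probability measure on the unit sphere S^{n-1}. -/

import Mathlib

open Set Metric MeasureTheory

/-- `F` is a `k`-dimensional face of the convex set `P`: a nonempty convex
extreme subset of `P` whose affine hull has dimension `k`. -/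
def IsFaceOfDim {n : ℕ} (P F : Set (EuclideanSpace ℝ (Fin n))) (k : ℕ) : Prop :=
  F.Nonempty ∧ Convex ℝ F ∧ IsExtreme ℝ P F ∧ Module.finrank ℝ (vectorSpan ℝ F) = k

open scoped RealInnerProductSpace

section Polytope

variable {E : Type*} [NormedAddCommGroup E] [InnerProductSpace ℝ E]

/-- The one-sided polar of a set: the vectors whose inner product with every element is at most
one. -/
def polarSet (A : Set E) : Set E := {u | ∀ x ∈ A, ⟪x, u⟫ ≤ 1}

lemma convex_setOf_inner_le (u : E) (c : ℝ) : Convex ℝ {x : E | ⟪x, u⟫ ≤ c} := by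
  have := convex_halfSpace_le (innerₛₗ ℝ u).isLinear c
  simpa [real_inner_comm] using this

lemma polarSet_convexHull (A : Set E) : polarSet (convexHull ℝ A) = polarSet A := by
  ext u
  exact (convex_setOf_inner_le u 1).convexHull_subset_iff

lemma isClosed_polarSet (A : Set E) : IsClosed (polarSet A) := by
  have : polarSet A = ⋂ x ∈ A, {u | ⟪x, u⟫ ≤ 1} := by ext; simp [polarSet]
  rw [this]
  exact isClosed_biInter fun x _ => isClosed_le (by fun_prop) continuous_const

lemma norm_le_of_mem_polarSet {A : Set E} {r : ℝ} (hr : 0 < r) (hA : closedBall 0 r ⊆ A)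
    {u : E} (hu : u ∈ polarSet A) : ‖u‖ ≤ 1 / r := by
  rcases eq_or_ne u 0 with rfl | hu0
  · simp [hr.le]
  have hpos : 0 < ‖u‖ := norm_pos_iff.2 hu0
  have hmem : (r / ‖u‖) • u ∈ closedBall (0 : E) r := by
    rw [mem_closedBall_zero_iff, norm_smul, Real.norm_eq_abs, abs_of_pos (by positivity)]
    exact (div_mul_cancel₀ r hpos.ne').le
  have h := hu _ (hA hmem)
  rw [real_inner_smul_left, real_inner_self_eq_norm_sq] at h
  rw [le_div_iff₀ hr]
  calc ‖u‖ * r = r / ‖u‖ * ‖u‖ ^ 2 := by field_simp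
    _ ≤ 1 := h

/-- The points of the convex hull of `S` lying on the supporting hyperplane given by `u`. -/
def dualFace (S : Set E) (u : E) : Set E := {x ∈ convexHull ℝ S | ⟪x, u⟫ = 1}

lemma convex_dualFace (S : Set E) (u : E) : Convex ℝ (dualFace S u) := by
  have h : Convex ℝ {x : E | ⟪x, u⟫ = 1} := by
    have := convex_hyperplane (innerₛₗ ℝ u).isLinear 1
    simpa [real_inner_comm] using this
  exact (convex_convexHull ℝ S).inter h

lemma isExtreme_dualFace {S : Set E} {u : E} (hu : u ∈ polarSet S) :
    IsExtreme ℝ (convexHull ℝ S) (dualFace S u) := by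
  rw [← polarSet_convexHull] at hu
  refine ⟨fun x hx => hx.1, ?_⟩
  rintro x hx y hy z ⟨-, hz⟩ ⟨a, b, ha, hb, hab, rfl⟩
  refine ⟨hx, le_antisymm (hu x hx) ?_⟩
  have hy1 := hu y hy
  rw [inner_add_left, real_inner_smul_left, real_inner_smul_left] at hz
  by_contra! h
  nlinarith

lemma span_tight_of_mem_extremePoints [FiniteDimensional ℝ E] {S : Set E} (hS : S.Finite) {u : E}
    (hu : u ∈ (polarSet S).extremePoints ℝ) :
    Submodule.span ℝ {s ∈ S | ⟪s, u⟫ = 1} = ⊤ := by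
  rw [← Submodule.orthogonal_eq_bot_iff, Submodule.eq_bot_iff]
  intro v hv
  have htight : ∀ s ∈ S, ⟪s, u⟫ = 1 → ⟪s, v⟫ = 0 := fun s hs h1 =>
    (Submodule.mem_orthogonal _ v).1 hv s (Submodule.subset_span ⟨hs, h1⟩)
  have hnear : ∀ w : E, (∀ s ∈ S, ⟪s, u⟫ = 1 → ⟪s, w⟫ = 0) →
      ∀ᶠ ε : ℝ in nhds 0, u + ε • w ∈ polarSet S := by
    intro w hw
    refine (Filter.eventually_all_finite hS).2 fun s hs => ?_
    rcases (hu.1 s hs).eq_or_lt with h1 | h1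
    · exact Filter.Eventually.of_forall fun ε => by
        simp [inner_add_right, real_inner_smul_right, hw s hs h1, h1]
    · have hc : Continuous fun ε : ℝ => ⟪s, u + ε • w⟫ := by fun_prop
      exact (hc.continuousAt.eventually_lt continuousAt_const (by simpa using h1)).mono
        fun ε h => h.le
  have hev := ((hnear v htight).and (hnear (-v) fun s hs h => by
    rw [inner_neg_right, htight s hs h, neg_zero]))
  obtain ⟨ε, ⟨h1, h2⟩, hε⟩ :=
    ((hev.filter_mono nhdsWithin_le_nhds).and (self_mem_nhdsWithin (s := Ioi (0 : ℝ)))).exists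
  have hseg : u ∈ openSegment ℝ (u + ε • v) (u + ε • -v) :=
    ⟨1 / 2, 1 / 2, by norm_num, by norm_num, by norm_num, by module⟩
  have := hu.2 h1 h2 hseg
  have hε0 : ε ≠ 0 := (mem_Ioi.1 hε).ne'
  simpa [hε0] using this

lemma eq_of_dualFace_eq [FiniteDimensional ℝ E] {S : Set E} (hS : S.Finite) {u w : E}
    (hu : u ∈ (polarSet S).extremePoints ℝ) (h : dualFace S u = dualFace S w) : u = w := by
  have hspan := span_tight_of_mem_extremePoints hS hu
  rw [← sub_eq_zero, ← Submodule.mem_bot ℝ, ← Submodule.top_orthogonal_eq_bot, ← hspan,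
    Submodule.mem_orthogonal]
  intro x hx
  induction hx using Submodule.span_induction with
  | mem x hx =>
    have hxu : x ∈ dualFace S u := ⟨subset_convexHull ℝ S hx.1, hx.2⟩
    have hxw : x ∈ dualFace S w := h ▸ hxu
    rw [inner_sub_right, hxu.2, hxw.2, sub_self]
  | zero => simp
  | add x y _ _ hx hy => rw [inner_add_left, hx, hy, add_zero]
  | smul a x _ hx => rw [real_inner_smul_left, hx, mul_zero]

lemma dualFace_nonempty [FiniteDimensional ℝ E] [Nontrivial E] {S : Set E} (hS : S.Finite) {u : E}
    (hu : u ∈ (polarSet S).extremePoints ℝ) : (dualFace S u).Nonempty := by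
  have hspan := span_tight_of_mem_extremePoints hS hu
  by_contra! hemp
  have : {s ∈ S | ⟪s, u⟫ = 1} = ∅ := by
    rw [← subset_empty_iff, ← hemp]
    exact fun s hs => ⟨subset_convexHull ℝ S hs.1, hs.2⟩
  rw [this, Submodule.span_empty] at hspan
  exact bot_ne_top hspan

lemma finrank_vectorSpan_dualFace [FiniteDimensional ℝ E] [Nontrivial E] {S : Set E}
    (hS : S.Finite) {u : E} (hu : u ∈ (polarSet S).extremePoints ℝ) :
    Module.finrank ℝ (vectorSpan ℝ (dualFace S u)) = Module.finrank ℝ E - 1 := by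
  have hspan := span_tight_of_mem_extremePoints hS hu
  obtain ⟨x₀, hx₀⟩ := dualFace_nonempty hS hu
  have hle : vectorSpan ℝ (dualFace S u) ≤ (Submodule.span ℝ {u})ᗮ := by
    rw [vectorSpan_def, Submodule.span_le]
    rintro _ ⟨x, hx, y, hy, rfl⟩
    rw [SetLike.mem_coe, Submodule.mem_orthogonal_singleton_iff_inner_left]
    simp [inner_sub_left, hx.2, hy.2]
  have hu0 : u ≠ 0 := by
    rintro rfl
    simpa using hx₀.2
  have h1 := Submodule.finrank_mono hle
  have h2 := (Submodule.span ℝ {u}).finrank_add_finrank_orthogonal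
  rw [finrank_span_singleton hu0] at h2
  have htop : (⊤ : Submodule ℝ E) ≤ Submodule.span ℝ {x₀} ⊔ vectorSpan ℝ (dualFace S u) := by
    rw [← hspan, Submodule.span_le]
    intro s hs
    have hsF : s ∈ dualFace S u := ⟨subset_convexHull ℝ S hs.1, hs.2⟩
    have := Submodule.add_mem_sup (Submodule.mem_span_singleton_self (R := ℝ) x₀)
      (vsub_mem_vectorSpan ℝ hsF hx₀)
    simpa using this
  have h3 := Submodule.finrank_mono htop
  have h4 := Submodule.finrank_add_le_finrank_add_finrank (Submodule.span ℝ {x₀})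
    (vectorSpan ℝ (dualFace S u))
  have h5 := finrank_span_le_card (R := ℝ) ({x₀} : Set E)
  rw [finrank_top] at h3
  simp only [toFinset_singleton, Finset.card_singleton] at h5
  omega

lemma IsExtreme.eq_convexHull_inter {S F : Set E} (hF : Convex ℝ F)
    (hext : IsExtreme ℝ (convexHull ℝ S) F) : F = convexHull ℝ (S ∩ F) := by
  refine Subset.antisymm (fun x hx => ?_) (convexHull_min inter_subset_right hF)
  have hdiff : convexHull ℝ (S \ F) ⊆ convexHull ℝ S \ F :=
    convexHull_min (sdiff_subset_sdiff_left (subset_convexHull ℝ S))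
      (hext.convex_sdiff (convex_convexHull ℝ S))
  have hxS := hext.subset hx
  rcases (S \ F).eq_empty_or_nonempty with h2 | h2
  · rwa [inter_eq_left.2 (sdiff_eq_empty.1 h2)]
  rcases (S ∩ F).eq_empty_or_nonempty with h1 | h1
  · have : S \ F = S := sdiff_eq_left.2 (disjoint_iff_inter_eq_empty.2 h1)
    rw [this] at hdiff
    exact absurd hx (hdiff hxS).2
  rw [← inter_union_sdiff S F, convexHull_union h1 h2, mem_convexJoin] at hxS
  obtain ⟨a, ha, b, hb, hab⟩ := hxS
  have hb' := hdiff hb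
  rw [← insert_endpoints_openSegment] at hab
  rcases hab with rfl | rfl | hab
  · exact ha
  · exact absurd hx hb'.2
  · exact absurd (hext.right_mem_of_mem_openSegment
      (convexHull_mono inter_subset_left ha) hb'.1 hx hab) hb'.2

lemma finite_setOf_convex_isExtreme {S : Set E} (hS : S.Finite) :
    {F : Set E | Convex ℝ F ∧ IsExtreme ℝ (convexHull ℝ S) F}.Finite := by
  refine (hS.finite_subsets.image (convexHull ℝ)).subset ?_
  rintro F ⟨hF, hext⟩
  exact ⟨S ∩ F, inter_subset_left, (hext.eq_convexHull_inter hF).symm⟩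

lemma gauge_le_of_forall_polarSet [CompleteSpace E] {P : Set E} (hP : Convex ℝ P)
    (hclosed : IsClosed P) (h0 : 0 ∈ P) {x : E} {a : ℝ} (ha : ∀ u ∈ polarSet P, ⟪x, u⟫ ≤ a) :
    gauge P x ≤ a := by
  have ha0 : 0 ≤ a := by simpa using ha 0 (fun y _ => by simp)
  refine le_of_forall_gt_imp_ge_of_dense fun t hat => ?_
  have ht : 0 < t := ha0.trans_lt hat
  by_contra! hlt
  have hx : t⁻¹ • x ∉ P := fun h =>
    hlt.not_ge (gauge_le_of_mem ht.le ((mem_smul_set_iff_inv_smul_mem₀ ht.ne' P x).2 h))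
  obtain ⟨f, c, hfc, hc⟩ := geometric_hahn_banach_closed_point hP hclosed hx
  have hc0 : 0 < c := by simpa using hfc 0 h0
  set w := (InnerProductSpace.toDual ℝ E).symm f with hw
  have hfw : ∀ y, f y = ⟪y, w⟫ := fun y => by
    rw [real_inner_comm, hw, InnerProductSpace.toDual_symm_apply]
  have hmem : c⁻¹ • w ∈ polarSet P := fun y hy => by
    rw [real_inner_smul_right, ← hfw, inv_mul_le_one₀ hc0]
    exact (hfc y hy).le
  have h1 := ha _ hmem
  rw [real_inner_smul_right, ← hfw] at h1
  rw [map_smul, smul_eq_mul, lt_inv_mul_iff₀ ht] at hc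
  rw [inv_mul_le_iff₀ hc0] at h1
  nlinarith

lemma exists_extremePoint_gauge_le [FiniteDimensional ℝ E] {P : Set E} (hP : Convex ℝ P)
    (hclosed : IsClosed P) {r : ℝ} (hr : 0 < r) (hball : closedBall 0 r ⊆ P) (x : E) :
    ∃ u ∈ (polarSet P).extremePoints ℝ, gauge P x ≤ ⟪x, u⟫ := by
  have hcomp : IsCompact (polarSet P) :=
    (isCompact_closedBall (0 : E) (1 / r)).of_isClosed_subset (isClosed_polarSet P)
      fun u hu => mem_closedBall_zero_iff.2 (norm_le_of_mem_polarSet hr hball hu)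
  have hne : (polarSet P).Nonempty := ⟨0, fun y _ => by simp⟩
  have hexp : IsExposed ℝ (polarSet P) ((innerSL ℝ x).toExposed (polarSet P)) :=
    ContinuousLinearMap.toExposed.isExposed
  obtain ⟨m, hm, hmax⟩ := hcomp.exists_isMaxOn hne
    (f := fun u => ⟪x, u⟫) (by fun_prop)
  obtain ⟨u, hu⟩ := (hexp.isCompact hcomp).extremePoints_nonempty
    ⟨m, hm, fun y hy => hmax hy⟩
  refine ⟨u, hexp.isExtreme.extremePoints_subset_extremePoints hu, ?_⟩
  exact gauge_le_of_forall_polarSet hP hclosed (hball (mem_closedBall_self hr.le))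
    fun w hw => hu.1.2 w hw

end Polytope

/-- The gauge of a polytope is dominated by the linear functionals of a family of at most as many
vectors as there are facets. -/
lemma exists_finset_gauge_le {n : ℕ} (hn : 0 < n) {r : ℝ} (hr : 0 < r)
    {S : Set (EuclideanSpace ℝ (Fin n))} (hS : S.Finite)
    (hball : closedBall 0 r ⊆ convexHull ℝ S) :
    ∃ U : Finset (EuclideanSpace ℝ (Fin n)),
      U.card ≤ {F | IsFaceOfDim (convexHull ℝ S) F (n - 1)}.ncard ∧
      (∀ u ∈ U, ‖u‖ ≤ 1 / r) ∧ ∀ x, ∃ u ∈ U, gauge (convexHull ℝ S) x ≤ ⟪x, u⟫ := by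
  have : Nonempty (Fin n) := ⟨⟨0, hn⟩⟩
  have hfin : {F | IsFaceOfDim (convexHull ℝ S) F (n - 1)}.Finite :=
    (finite_setOf_convex_isExtreme hS).subset fun F hF => ⟨hF.2.1, hF.2.2.1⟩
  have hmaps : MapsTo (dualFace S) ((polarSet S).extremePoints ℝ)
      {F | IsFaceOfDim (convexHull ℝ S) F (n - 1)} := fun u hu =>
    ⟨dualFace_nonempty hS hu, convex_dualFace S u, isExtreme_dualFace hu.1, by
      rw [finrank_vectorSpan_dualFace hS hu, finrank_euclideanSpace_fin]⟩
  have hinj : InjOn (dualFace S) ((polarSet S).extremePoints ℝ) :=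
    fun u hu w _ h => eq_of_dualFace_eq hS hu h
  have hU := Set.Finite.of_injOn hmaps hinj hfin
  refine ⟨hU.toFinset, ?_, fun u hu => ?_, fun x => ?_⟩
  · rw [← ncard_eq_toFinset_card _ hU]
    exact ncard_le_ncard_of_injOn _ hmaps hinj hfin
  · refine norm_le_of_mem_polarSet hr hball ?_
    rw [polarSet_convexHull]
    exact (hU.mem_toFinset.1 hu).1
  · simpa [polarSet_convexHull] using exists_extremePoint_gauge_le (convex_convexHull ℝ S)
      (hS.isClosed_convexHull ℝ) hr hball x

section Sphere

variable {n : ℕ} {σ : Measure (EuclideanSpace ℝ (Fin n))}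

lemma integrable_of_continuous_of_ae_mem_sphere [IsProbabilityMeasure σ]
    (hσ : ∀ᵐ θ ∂σ, θ ∈ sphere (0 : EuclideanSpace ℝ (Fin n)) 1)
    {f : EuclideanSpace ℝ (Fin n) → ℝ} (hf : Continuous f) : Integrable f σ := by
  obtain ⟨C, hC⟩ := (isCompact_sphere (0 : EuclideanSpace ℝ (Fin n)) 1).exists_bound_of_continuousOn
    hf.continuousOn
  exact Integrable.of_bound hf.aestronglyMeasurable C (hσ.mono hC)

lemma integral_exp_inner_eq_of_norm_eq
    (hinv : ∀ T : EuclideanSpace ℝ (Fin n) ≃ₗᵢ[ℝ] EuclideanSpace ℝ (Fin n), Measure.map T σ = σ)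
    {v w : EuclideanSpace ℝ (Fin n)} (h : ‖v‖ = ‖w‖) :
    ∫ θ, Real.exp ⟪θ, v⟫ ∂σ = ∫ θ, Real.exp ⟪θ, w⟫ ∂σ := by
  set T := (ℝ ∙ (v - w))ᗮ.reflection
  have hT : T v = w := Submodule.reflection_sub h
  have hc : Continuous fun θ : EuclideanSpace ℝ (Fin n) => Real.exp ⟪θ, w⟫ := by fun_prop
  conv_rhs => rw [← hinv T, integral_map T.continuous.aemeasurable hc.aestronglyMeasurable]
  simp_rw [← hT, LinearIsometryEquiv.inner_map_map]

/-- A linear functional is sub-Gaussian with variance proxy `‖v‖ ^ 2 / n` on the sphere: average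
over the vectors with the same norm as `v` and all coordinates of equal absolute value. -/
lemma integral_exp_inner_le (hn : 0 < n) [IsProbabilityMeasure σ]
    (hσ : ∀ᵐ θ ∂σ, θ ∈ sphere (0 : EuclideanSpace ℝ (Fin n)) 1)
    (hinv : ∀ T : EuclideanSpace ℝ (Fin n) ≃ₗᵢ[ℝ] EuclideanSpace ℝ (Fin n), Measure.map T σ = σ)
    (v : EuclideanSpace ℝ (Fin n)) :
    ∫ θ, Real.exp ⟪θ, v⟫ ∂σ ≤ Real.exp (‖v‖ ^ 2 / (2 * n)) := by
  have hn' : (0 : ℝ) < n := by exact_mod_cast hn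
  set b : ℝ := ‖v‖ / √n
  have hb2 : b ^ 2 = ‖v‖ ^ 2 / n := by rw [div_pow, Real.sq_sqrt hn'.le]
  let sgn : Bool → ℝ := fun e => if e then 1 else -1
  let w : (Fin n → Bool) → EuclideanSpace ℝ (Fin n) := fun ε => WithLp.toLp 2 fun i => b * sgn (ε i)
  have hw : ∀ ε, ‖v‖ = ‖w ε‖ := fun ε => by
    have hsq : ∀ e, sgn e ^ 2 = 1 := by intro e; cases e <;> simp [sgn]
    rw [← sq_eq_sq₀ (norm_nonneg _) (norm_nonneg _), EuclideanSpace.real_norm_sq_eq (w ε)]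
    simp only [w, mul_pow, hsq, mul_one, Finset.sum_const, Finset.card_univ, Fintype.card_fin,
      nsmul_eq_mul, hb2]
    field_simp
  have hint : ∀ u : EuclideanSpace ℝ (Fin n), Integrable (fun θ => Real.exp ⟪θ, u⟫) σ :=
    fun u => integrable_of_continuous_of_ae_mem_sphere hσ (by fun_prop)
  have hpoint : ∀ θ ∈ sphere (0 : EuclideanSpace ℝ (Fin n)) 1,
      ∑ ε, Real.exp ⟪θ, w ε⟫ ≤ 2 ^ n * Real.exp (‖v‖ ^ 2 / (2 * n)) := fun θ hθ => by
    have hθ1 : ∑ i, θ i ^ 2 = 1 := by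
      rw [← EuclideanSpace.real_norm_sq_eq, mem_sphere_zero_iff_norm.1 hθ, one_pow]
    calc ∑ ε, Real.exp ⟪θ, w ε⟫
        = ∑ ε : Fin n → Bool, ∏ i, Real.exp (b * θ i * sgn (ε i)) := by
          refine Finset.sum_congr rfl fun ε _ => ?_
          rw [← Real.exp_sum, PiLp.inner_apply]
          congr 1
          refine Finset.sum_congr rfl fun i _ => ?_
          simp only [w, RCLike.inner_apply, conj_trivial]
          ring
      _ = ∏ i, ∑ e, Real.exp (b * θ i * sgn e) :=
          (Fintype.prod_sum fun i e => Real.exp (b * θ i * sgn e)).symm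
      _ = ∏ i, (2 * Real.cosh (b * θ i)) := by
          refine Finset.prod_congr rfl fun i _ => ?_
          simp [sgn, Real.cosh_eq]
          ring
      _ ≤ ∏ i, (2 * Real.exp ((b * θ i) ^ 2 / 2)) := by
          gcongr with i
          exact Real.cosh_le_exp_half_sq _
      _ = 2 ^ n * Real.exp (‖v‖ ^ 2 / (2 * n)) := by
          rw [Finset.prod_mul_distrib, ← Real.exp_sum]
          simp only [Finset.prod_const, Finset.card_univ, Fintype.card_fin, mul_pow]
          rw [← Finset.sum_div, ← Finset.mul_sum, hθ1, hb2]
          congr 2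
          field_simp
  have hsum : ∑ ε, ∫ θ, Real.exp ⟪θ, w ε⟫ ∂σ = 2 ^ n * ∫ θ, Real.exp ⟪θ, v⟫ ∂σ := by
    simp [← integral_exp_inner_eq_of_norm_eq hinv (hw _)]
  have hle : ∫ θ, ∑ ε, Real.exp ⟪θ, w ε⟫ ∂σ ≤ ∫ _, 2 ^ n * Real.exp (‖v‖ ^ 2 / (2 * n)) ∂σ :=
    integral_mono_ae (integrable_finsetSum _ fun ε _ => hint _) (integrable_const _)
      (hσ.mono hpoint)
  rw [integral_finsetSum _ fun ε _ => hint _, hsum, integral_const] at hle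
  simpa using hle

/-- Maximal inequality on the sphere for finitely many linear functionals. -/
lemma integral_le_of_forall_exists_le_inner (hn : 0 < n) [IsProbabilityMeasure σ]
    (hσ : ∀ᵐ θ ∂σ, θ ∈ sphere (0 : EuclideanSpace ℝ (Fin n)) 1)
    (hinv : ∀ T : EuclideanSpace ℝ (Fin n) ≃ₗᵢ[ℝ] EuclideanSpace ℝ (Fin n), Measure.map T σ = σ)
    {g : EuclideanSpace ℝ (Fin n) → ℝ} (hg : Continuous g)
    {U : Finset (EuclideanSpace ℝ (Fin n))} {ρ : ℝ} (hU : ∀ u ∈ U, ‖u‖ ≤ ρ)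
    (hgU : ∀ x, ∃ u ∈ U, g x ≤ ⟪x, u⟫) {l : ℝ} (hl : 0 < l) :
    l * ∫ θ, g θ ∂σ ≤ Real.log U.card + (l * ρ) ^ 2 / (2 * n) := by
  have hcard : (0 : ℝ) < U.card := by
    obtain ⟨u, hu, -⟩ := hgU 0
    exact_mod_cast Finset.card_pos.2 ⟨u, hu⟩
  set a := Real.log U.card + (l * ρ) ^ 2 / (2 * n) with ha
  have hint : ∀ u : EuclideanSpace ℝ (Fin n), Integrable (fun θ => Real.exp ⟪θ, u⟫) σ :=
    fun u => integrable_of_continuous_of_ae_mem_sphere hσ (by fun_prop)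
  have hgint := integrable_of_continuous_of_ae_mem_sphere hσ hg
  have hpoint : ∀ θ, l * g θ - a + 1 ≤ Real.exp (-a) * ∑ u ∈ U, Real.exp ⟪θ, l • u⟫ := fun θ => by
    obtain ⟨u, hu, hgu⟩ := hgU θ
    calc l * g θ - a + 1 ≤ Real.exp (l * g θ - a) := Real.add_one_le_exp _
      _ ≤ Real.exp (-a + ⟪θ, l • u⟫) := by
          rw [real_inner_smul_right]
          gcongr
          nlinarith
      _ = Real.exp (-a) * Real.exp ⟪θ, l • u⟫ := Real.exp_add _ _
      _ ≤ _ := by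
          gcongr
          exact Finset.single_le_sum (f := fun u => Real.exp ⟪θ, l • u⟫)
            (fun _ _ => (Real.exp_pos _).le) hu
  have hsub : Integrable (fun θ => l * g θ - a) σ := (hgint.const_mul l).sub (integrable_const a)
  have h := integral_mono (μ := σ) (hsub.add (integrable_const 1))
    ((integrable_finsetSum U fun u _ => hint (l • u)).const_mul _) hpoint
  have hleft : ∫ θ, (l * g θ - a + 1) ∂σ = l * ∫ θ, g θ ∂σ - a + 1 := by
    rw [integral_add hsub (integrable_const 1),
      integral_sub (hgint.const_mul l) (integrable_const a), integral_const_mul]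
    simp
  have hright : Real.exp (-a) * ∑ u ∈ U, ∫ θ, Real.exp ⟪θ, l • u⟫ ∂σ ≤ 1 := by
    calc _ ≤ Real.exp (-a) * ∑ u ∈ U, Real.exp ((l * ρ) ^ 2 / (2 * n)) := by
          gcongr with u hu
          refine (integral_exp_inner_le hn hσ hinv _).trans ?_
          rw [norm_smul, Real.norm_of_nonneg hl.le]
          gcongr
          exact hU u hu
      _ = Real.exp (-a) * Real.exp a := by
          rw [Finset.sum_const, nsmul_eq_mul, ha, Real.exp_add (Real.log _), Real.exp_log hcard]
      _ = 1 := by rw [← Real.exp_add, neg_add_cancel, Real.exp_zero]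
  have h' : l * ∫ θ, g θ ∂σ - a + 1 ≤ 1 := by
    rw [← hleft]
    refine h.trans ?_
    rw [integral_const_mul, integral_finsetSum _ fun u _ => hint (l • u)]
    exact hright
  linarith

end Sphere

lemma le_sqrt_two_mul_of_forall_pos {m ρ L k : ℝ} (hρ : 0 < ρ) (hL : 0 ≤ L) (hk : 0 < k)
    (h : ∀ l : ℝ, 0 < l → l * m ≤ L + (l * ρ) ^ 2 / (2 * k)) :
    m ≤ √2 * ρ * √(L / k) := by
  rcases hL.eq_or_lt with rfl | hL
  · simp only [zero_div, Real.sqrt_zero, mul_zero]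
    by_contra! hm
    have := h (k * m / ρ ^ 2) (by positivity)
    have hpos : 0 < k * m ^ 2 / ρ ^ 2 := by positivity
    have e1 : k * m / ρ ^ 2 * m = k * m ^ 2 / ρ ^ 2 := by ring
    have e2 : (k * m / ρ ^ 2 * ρ) ^ 2 / (2 * k) = k * m ^ 2 / ρ ^ 2 / 2 := by field_simp
    linarith
  · set s := √(2 * L * k) with hs
    have hspos : 0 < s := Real.sqrt_pos.2 (by positivity)
    have hs2 : s ^ 2 = 2 * L * k := Real.sq_sqrt (by positivity)
    have h1 := h (s / ρ) (by positivity)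
    rw [div_mul_cancel₀ _ hρ.ne', hs2] at h1
    have h2 : 2 * L * k / (2 * k) = L := by field_simp
    have h3 : √2 * √(L / k) = s / k := by
      rw [← Real.sqrt_mul two_pos.le, eq_div_iff hk.ne', hs]
      nth_rewrite 2 [← Real.sqrt_sq hk.le]
      rw [← Real.sqrt_mul (by positivity)]
      congr 1
      field_simp
    rw [mul_right_comm, h3]
    rw [h2, div_mul_eq_mul_div, div_le_iff₀ hρ] at h1
    rw [div_mul_eq_mul_div, le_div_iff₀ hk]
    nlinarith

/-- There is an absolute constant `C > 0` such that for every polytope `P ⊆ ℝⁿ`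
containing `r·B_n`, with facet set `𝓕` satisfying `log |𝓕| < n/4`, one has
`M(P) = ∫_{S^{n-1}} ‖θ‖_P dσ ≤ C·(1/r)·√(log |𝓕| / n)`, where `‖·‖_P` is the gauge of `P`. -/
theorem mean_gauge_of_polytope :
    ∃ C : ℝ, 0 < C ∧
      ∀ (n : ℕ), 0 < n → ∀ (r : ℝ), 0 < r →
        ∀ σ : Measure (EuclideanSpace ℝ (Fin n)), IsProbabilityMeasure σ →
          σ (sphere (0 : EuclideanSpace ℝ (Fin n)) 1) = 1 →
          (∀ T : EuclideanSpace ℝ (Fin n) ≃ₗᵢ[ℝ] EuclideanSpace ℝ (Fin n),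
            Measure.map T σ = σ) →
          ∀ S : Finset (EuclideanSpace ℝ (Fin n)),
            ∀ P : Set (EuclideanSpace ℝ (Fin n)),
              P = convexHull ℝ (S : Set (EuclideanSpace ℝ (Fin n))) →
              closedBall (0 : EuclideanSpace ℝ (Fin n)) r ⊆ P →
              Real.log (({F : Set (EuclideanSpace ℝ (Fin n)) | IsFaceOfDim P F (n - 1)}).ncard)
                  < n / 4 →
                ∫ θ in sphere (0 : EuclideanSpace ℝ (Fin n)) 1, gauge P θ ∂σ ≤
                  C * (1 / r) *
                    Real.sqrt
                      (Real.log
                          (({F : Set (EuclideanSpace ℝ (Fin n)) |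
                              IsFaceOfDim P F (n - 1)}).ncard) / n) := by
  refine ⟨√2, by positivity, ?_⟩
  intro n hn r hr σ hprob hsphere hinv S P hP hball _
  subst hP
  have hσ : ∀ᵐ θ ∂σ, θ ∈ sphere (0 : EuclideanSpace ℝ (Fin n)) 1 :=
    (mem_ae_iff_prob_eq_one isClosed_sphere.measurableSet).2 hsphere
  obtain ⟨U, hcard, hnorm, hU⟩ := exists_finset_gauge_le hn hr S.finite_toSet hball
  have hUpos : 0 < U.card := by
    obtain ⟨u, hu, -⟩ := hU 0
    exact Finset.card_pos.2 ⟨u, hu⟩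
  have hcont : Continuous (gauge (convexHull ℝ (S : Set (EuclideanSpace ℝ (Fin n))))) :=
    continuous_gauge (convex_convexHull ℝ _)
      (Filter.mem_of_superset (closedBall_mem_nhds 0 hr) hball)
  rw [Measure.restrict_eq_self_of_ae_mem hσ]
  refine le_sqrt_two_mul_of_forall_pos (by positivity)
    (Real.log_natCast_nonneg _) (by exact_mod_cast hn) fun l hl => ?_
  refine (integral_le_of_forall_exists_le_inner hn hσ hinv hcont hnorm hU hl).trans ?_
  gcongr
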